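/- arXiv:2605.09221 — 5 statements merged into one kernel-verified Lean document; each statement's English description precedes it below -/
import Mathlib

section
/- Suppose additionally that: (i) E[S | {G = g}] = p_g for both g (group-conditional unbiasedness); (ii) E[S | {Y = 1} ∩ {G = a}] = E[S | {Y = 1} ∩ {G = b}] (positive-class balance), where both conditioning events have positive measure; and (iii) E[S | {Y = 0} ∩ {G = a}] = E[S | {Y = 0} ∩ {G = b}] (negative-class balance), where both conditioning events have positive measure. Then either p_a = p_b, or S = Y μ-almost everywhere. -/
open MeasureTheory

/-- Conditional expectation of `f` given the event `A`: `E[f | A] = (μ A)⁻¹ ∫_A f dμ`. -/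
noncomputable def condExpEvent {Ω : Type*} [MeasurableSpace Ω] (μ : Measure Ω)
    (A : Set Ω) (f : Ω → ℝ) : ℝ :=
  (μ A).toReal⁻¹ * ∫ ω in A, f ω ∂μ

/-!
Let `x` and `y` be the class means `E[S | Y = 1, G = g]` and `E[S | Y = 0, G = g]`, common to all
groups. Within a group of base rate `p`, the law of total expectation turns unbiasedness into
`p * x + (1 - p) * y = p`: every base rate is a fixed point of the affine map
`p ↦ p * x + (1 - p) * y`. An affine map with two distinct fixed points is the identity, so `x = 1`
and `y = 0`. These are the extreme values allowed by `S ≤ 1` and `0 ≤ S`, and a function whose mean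
equals one of its bounds is almost everywhere equal to that bound.
-/

lemma eq_one_and_eq_zero_of_two_fixed_points {R : Type*} [CommRing R] [NoZeroDivisors R]
    {p q x y : R} (hpq : p ≠ q) (hp : p * x + (1 - p) * y = p) (hq : q * x + (1 - q) * y = q) :
    x = 1 ∧ y = 0 := by
  have slope_eq_one : x - y = 1 := by
    have : (p - q) * (x - y - 1) = 0 := by linear_combination hp - hq
    exact sub_eq_zero.mp ((mul_eq_zero.mp this).resolve_left (sub_ne_zero.mpr hpq))
  have y_eq_zero : y = 0 := by linear_combination hp - p * slope_eq_one
  exact ⟨by linear_combination slope_eq_one + y_eq_zero, y_eq_zero⟩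

section

variable {Ω : Type*} [MeasurableSpace Ω] {μ : Measure Ω} {A B : Set Ω} {f S Y : Ω → ℝ} {c x y : ℝ}

lemma setIntegral_eq_add_of_zero_or_one (hY : Measurable Y) (hY01 : ∀ ω, Y ω = 0 ∨ Y ω = 1)
    (hf : IntegrableOn f B μ) :
    ∫ ω in B, f ω ∂μ =
      ∫ ω in {ω | Y ω = 1} ∩ B, f ω ∂μ + ∫ ω in {ω | Y ω = 0} ∩ B, f ω ∂μ := by
  have sdiff_eq : B \ {ω | Y ω = 1} = {ω | Y ω = 0} ∩ B := by
    ext ω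
    rcases hY01 ω with h | h <;> simp [h]
  rw [← integral_inter_add_sdiff (hY (measurableSet_singleton 1)) hf, ← sdiff_eq, Set.inter_comm]
  rfl

variable [IsFiniteMeasure μ]

lemma measureReal_mul_condExpEvent : μ.real A * condExpEvent μ A f = ∫ ω in A, f ω ∂μ := by
  rw [← measure_smul_setAverage f (measure_ne_top μ A), setAverage_eq]
  rfl

lemma setIntegral_eq_of_condExpEvent_eq (h : μ A ≠ 0 → condExpEvent μ A f = c) :
    ∫ ω in A, f ω ∂μ = μ.real A * c := by
  by_cases hA : μ A = 0
  · rw [setIntegral_measure_zero f hA, measureReal_def, hA, ENNReal.toReal_zero, zero_mul]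
  · rw [← h hA, measureReal_mul_condExpEvent]

lemma ae_restrict_eq_of_ae_le_of_condExpEvent_eq (hf : IntegrableOn f A μ)
    (hle : ∀ᵐ ω ∂μ.restrict A, f ω ≤ c) (hc : μ A ≠ 0 → condExpEvent μ A f = c) :
    ∀ᵐ ω ∂μ.restrict A, f ω = c := by
  refine (integral_eq_iff_of_ae_le hf (integrable_const c) hle).mp ?_
  rw [setIntegral_eq_of_condExpEvent_eq hc, setIntegral_const, smul_eq_mul]

lemma ae_restrict_eq_of_ae_ge_of_condExpEvent_eq (hf : IntegrableOn f A μ)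
    (hge : ∀ᵐ ω ∂μ.restrict A, c ≤ f ω) (hc : μ A ≠ 0 → condExpEvent μ A f = c) :
    ∀ᵐ ω ∂μ.restrict A, f ω = c := by
  refine ((integral_eq_iff_of_ae_le (integrable_const c) hf hge).mp ?_).symm
  rw [setIntegral_eq_of_condExpEvent_eq hc, setIntegral_const, smul_eq_mul]

lemma measureReal_setOf_eq_one_inter (hY : Measurable Y) (hY01 : ∀ ω, Y ω = 0 ∨ Y ω = 1) :
    μ.real ({ω | Y ω = 1} ∩ B) = μ.real B * condExpEvent μ B Y := by
  have hY1 : MeasurableSet {ω | Y ω = 1} := hY (measurableSet_singleton 1)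
  have Y_eq_indicator : Y = {ω | Y ω = 1}.indicator 1 := by
    ext ω
    rcases hY01 ω with h | h <;> simp [h]
  calc μ.real ({ω | Y ω = 1} ∩ B)
      = ∫ ω in B, {ω | Y ω = 1}.indicator 1 ω ∂μ := by
        rw [integral_indicator_one hY1, measureReal_restrict_apply hY1]
    _ = μ.real B * condExpEvent μ B Y := by
        rw [← Y_eq_indicator, measureReal_mul_condExpEvent]

lemma measureReal_setOf_eq_zero_inter (hY : Measurable Y) (hY01 : ∀ ω, Y ω = 0 ∨ Y ω = 1) :
    μ.real ({ω | Y ω = 0} ∩ B) = μ.real B * (1 - condExpEvent μ B Y) := by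
  have measureReal_split : μ.real B = μ.real ({ω | Y ω = 1} ∩ B) + μ.real ({ω | Y ω = 0} ∩ B) := by
    simpa using setIntegral_eq_add_of_zero_or_one hY hY01 (integrable_const (μ := μ.restrict B) 1)
  linear_combination -measureReal_split - measureReal_setOf_eq_one_inter (μ := μ) (B := B) hY hY01

lemma condExpEvent_eq_mul_add_one_sub_mul (hY : Measurable Y) (hY01 : ∀ ω, Y ω = 0 ∨ Y ω = 1)
    (hB : μ B ≠ 0) (hf : IntegrableOn f B μ)
    (hx : μ ({ω | Y ω = 1} ∩ B) ≠ 0 → condExpEvent μ ({ω | Y ω = 1} ∩ B) f = x)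
    (hy : μ ({ω | Y ω = 0} ∩ B) ≠ 0 → condExpEvent μ ({ω | Y ω = 0} ∩ B) f = y) :
    condExpEvent μ B f = condExpEvent μ B Y * x + (1 - condExpEvent μ B Y) * y := by
  refine mul_left_cancel₀ ((measureReal_ne_zero_iff).mpr hB) ?_
  rw [measureReal_mul_condExpEvent, setIntegral_eq_add_of_zero_or_one hY hY01 hf,
    setIntegral_eq_of_condExpEvent_eq hx, setIntegral_eq_of_condExpEvent_eq hy,
    measureReal_setOf_eq_one_inter hY hY01, measureReal_setOf_eq_zero_inter hY hY01]
  ring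

lemma ae_eq_on_of_condExpEvent_eq_one_of_eq_zero (hY : Measurable Y)
    (hY01 : ∀ ω, Y ω = 0 ∨ Y ω = 1) (hB : MeasurableSet B) (hS : IntegrableOn S B μ)
    (hS1 : ∀ᵐ ω ∂μ, Y ω = 1 → S ω ≤ 1) (hS0 : ∀ᵐ ω ∂μ, Y ω = 0 → 0 ≤ S ω)
    (h1 : μ ({ω | Y ω = 1} ∩ B) ≠ 0 → condExpEvent μ ({ω | Y ω = 1} ∩ B) S = 1)
    (h0 : μ ({ω | Y ω = 0} ∩ B) ≠ 0 → condExpEvent μ ({ω | Y ω = 0} ∩ B) S = 0) :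
    ∀ᵐ ω ∂μ, ω ∈ B → S ω = Y ω := by
  have hclass (i : ℝ) : MeasurableSet ({ω | Y ω = i} ∩ B) :=
    (hY (measurableSet_singleton i)).inter hB
  have S_eq_one := ae_restrict_eq_of_ae_le_of_condExpEvent_eq (hS.mono_set Set.inter_subset_right)
    ((ae_restrict_iff' (hclass 1)).mpr (hS1.mono fun _ h hω ↦ h hω.1)) h1
  have S_eq_zero := ae_restrict_eq_of_ae_ge_of_condExpEvent_eq (hS.mono_set Set.inter_subset_right)
    ((ae_restrict_iff' (hclass 0)).mpr (hS0.mono fun _ h hω ↦ h hω.1)) h0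
  filter_upwards [(ae_restrict_iff' (hclass 1)).mp S_eq_one,
    (ae_restrict_iff' (hclass 0)).mp S_eq_zero] with ω hω1 hω0 hωB
  rcases hY01 ω with h | h
  · rw [h, hω0 ⟨h, hωB⟩]
  · rw [h, hω1 ⟨h, hωB⟩]

end

-- `condExpEvent` takes the junk value `0` on null events, so balance is imposed only on classes of
-- positive measure.
theorem stronger_kmr_general {Ω ι : Type*} [MeasurableSpace Ω] [Countable ι] [MeasurableSpace ι]
    [MeasurableSingletonClass ι] {μ : Measure Ω} [IsFiniteMeasure μ]
    {Y : Ω → ℝ} (hY : Measurable Y) (hY01 : ∀ ω, Y ω = 0 ∨ Y ω = 1)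
    {G : Ω → ι} (hG : Measurable G) (hG0 : ∀ g, μ {ω | G ω = g} ≠ 0)
    {S : Ω → ℝ} (hS : Integrable S μ)
    (hS1 : ∀ᵐ ω ∂μ, Y ω = 1 → S ω ≤ 1) (hS0 : ∀ᵐ ω ∂μ, Y ω = 0 → 0 ≤ S ω)
    (hunbiased : ∀ g, condExpEvent μ {ω | G ω = g} S = condExpEvent μ {ω | G ω = g} Y)
    {x y : ℝ}
    (hbal_pos : ∀ g, μ ({ω | Y ω = 1} ∩ {ω | G ω = g}) ≠ 0 →
      condExpEvent μ ({ω | Y ω = 1} ∩ {ω | G ω = g}) S = x)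
    (hbal_neg : ∀ g, μ ({ω | Y ω = 0} ∩ {ω | G ω = g}) ≠ 0 →
      condExpEvent μ ({ω | Y ω = 0} ∩ {ω | G ω = g}) S = y) :
    (∀ g g', condExpEvent μ {ω | G ω = g} Y = condExpEvent μ {ω | G ω = g'} Y) ∨
      S =ᵐ[μ] Y := by
  have base_rate_fixed (g : ι) : condExpEvent μ {ω | G ω = g} Y * x +
      (1 - condExpEvent μ {ω | G ω = g} Y) * y = condExpEvent μ {ω | G ω = g} Y :=
    (condExpEvent_eq_mul_add_one_sub_mul hY hY01 (hG0 g) hS.integrableOn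
      (hbal_pos g) (hbal_neg g)).symm.trans (hunbiased g)
  refine or_iff_not_imp_left.mpr fun hne ↦ ?_
  push Not at hne
  obtain ⟨g, g', hgg'⟩ := hne
  obtain ⟨rfl, rfl⟩ :=
    eq_one_and_eq_zero_of_two_fixed_points hgg' (base_rate_fixed g) (base_rate_fixed g')
  have S_eq_Y_on_group (g : ι) : ∀ᵐ ω ∂μ, G ω = g → S ω = Y ω :=
    ae_eq_on_of_condExpEvent_eq_one_of_eq_zero hY hY01 (hG (measurableSet_singleton g))
      hS.integrableOn hS1 hS0 (hbal_pos g) (hbal_neg g)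
  filter_upwards [ae_all_iff.mpr S_eq_Y_on_group] with ω hω using hω (G ω) rfl

/-- **Stronger KMR.** If `S ∈ [0,1]` is group-conditionally unbiased and satisfies
positive- and negative-class balance, then either the base rates coincide or `S = Y`
almost everywhere. -/
theorem stronger_kmr {Ω : Type*} [MeasurableSpace Ω] (μ : Measure Ω)
    [IsProbabilityMeasure μ]
    (Y : Ω → ℝ) (hYmeas : Measurable Y) (hY01 : ∀ ω, Y ω = 0 ∨ Y ω = 1)
    (G : Ω → Bool) (hGmeas : Measurable G)
    (hGa : 0 < μ {ω | G ω = true}) (hGb : 0 < μ {ω | G ω = false})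
    (S : Ω → ℝ) (hSmeas : Measurable S)
    (hS01 : ∀ᵐ ω ∂μ, 0 ≤ S ω ∧ S ω ≤ 1)
    (p : Bool → ℝ) (hp : ∀ g, p g = condExpEvent μ {ω | G ω = g} Y)
    (hp01 : ∀ g, 0 < p g ∧ p g < 1)
    -- (i) group-conditional unbiasedness
    (hunbiased : ∀ g, condExpEvent μ {ω | G ω = g} S = p g)
    -- (ii) positive-class balance, conditioning events have positive measure
    (hpos_a : 0 < μ ({ω | Y ω = 1} ∩ {ω | G ω = true}))
    (hpos_b : 0 < μ ({ω | Y ω = 1} ∩ {ω | G ω = false}))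
    (hbal_pos : condExpEvent μ ({ω | Y ω = 1} ∩ {ω | G ω = true}) S
      = condExpEvent μ ({ω | Y ω = 1} ∩ {ω | G ω = false}) S)
    -- (iii) negative-class balance, conditioning events have positive measure
    (hneg_a : 0 < μ ({ω | Y ω = 0} ∩ {ω | G ω = true}))
    (hneg_b : 0 < μ ({ω | Y ω = 0} ∩ {ω | G ω = false}))
    (hbal_neg : condExpEvent μ ({ω | Y ω = 0} ∩ {ω | G ω = true}) S
      = condExpEvent μ ({ω | Y ω = 0} ∩ {ω | G ω = false}) S) :
    p true = p false ∨ S =ᵐ[μ] Y := by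
  rw [hp, hp]
  exact (stronger_kmr_general hYmeas hY01 hGmeas (Bool.forall_bool.mpr ⟨hGb.ne', hGa.ne'⟩)
    (.of_mem_Icc 0 1 hSmeas.aemeasurable hS01) (hS01.mono fun _ h _ ↦ h.2)
    (hS01.mono fun _ h _ ↦ h.1) (fun g ↦ (hunbiased g).trans (hp g))
    (Bool.forall_bool.mpr ⟨fun _ ↦ rfl, fun _ ↦ hbal_pos⟩)
    (Bool.forall_bool.mpr ⟨fun _ ↦ rfl, fun _ ↦ hbal_neg⟩)).imp_left (· true false)
end

section
/- Suppose additionally that: (i) S is a version of the conditional expectation of Y given the σ-algebra generated by the pair (S, G), i.e. μ[Y | σ(S, G)] = S almost everywhere (within-group calibration); (ii) E[S | {Y = 1} ∩ {G = a}] = E[S | {Y = 1} ∩ {G = b}], where both conditioning events have positive measure; and (iii) E[S | {Y = 0} ∩ {G = a}] = E[S | {Y = 0} ∩ {G = b}], where both conditioning events have positive measure. Then either p_a = p_b, or S = Y μ-almost everywhere. -/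
open MeasureTheory

/-- The σ-algebra generated by the pair `(S, G)`. -/
def sigmaSG {Ω : Type*} (S : Ω → ℝ) (G : Ω → Bool) : MeasurableSpace Ω :=
  MeasurableSpace.comap (fun ω => (S ω, G ω)) inferInstance

/-!
In a group with base rate `p`, let `c` and `d` be the mean scores of the positive and of the
negative class. Calibration makes the mean score equal to `p`, so `p = p * c + (1 - p) * d`, i.e.
`p * (1 - c + d) = d`. Class balance makes `c` and `d` common to all groups; two distinct base
rates then force `c = 1` and `d = 0`. As `0 ≤ S ≤ 1`, these extreme means are attained only when
`S = 1` almost everywhere on the positive class and `S = 0` almost everywhere on the negative one.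
-/

theorem condExpEvent_eq_setAverage {Ω : Type*} [MeasurableSpace Ω] (μ : Measure Ω) (A : Set Ω)
    (f : Ω → ℝ) : condExpEvent μ A f = ⨍ ω in A, f ω ∂μ :=
  (setAverage_eq μ f A).symm

theorem setIntegral_eq_mul_of_condExpEvent_eq {Ω : Type*} [MeasurableSpace Ω] {μ : Measure Ω}
    {A : Set Ω} {f : Ω → ℝ} {c : ℝ} (hc : condExpEvent μ A f = c)
    (hA : μ A ≠ ⊤ := by finiteness) :
    ∫ ω in A, f ω ∂μ = c * μ.real A := by
  rw [← hc, condExpEvent_eq_setAverage, mul_comm, ← smul_eq_mul, measure_smul_setAverage f hA]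

theorem setIntegral_eq_of_condExp_ae_eq {Ω : Type*} {m m₀ : MeasurableSpace Ω} {μ : Measure Ω}
    {f g : Ω → ℝ} {A : Set Ω} (hm : m ≤ m₀) [SigmaFinite (μ.trim hm)] (hf : Integrable f μ)
    (hfg : μ[f | m] =ᵐ[μ] g) (hA : MeasurableSet[m] A) :
    ∫ ω in A, g ω ∂μ = ∫ ω in A, f ω ∂μ :=
  calc ∫ ω in A, g ω ∂μ = ∫ ω in A, (μ[f | m]) ω ∂μ :=
        integral_congr_ae (ae_restrict_of_ae hfg.symm)
    _ = ∫ ω in A, f ω ∂μ := setIntegral_condExp hm hf hA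

theorem sigmaSG_le {Ω : Type*} [m₀ : MeasurableSpace Ω] {S : Ω → ℝ} {G : Ω → Bool}
    (hS : Measurable S) (hG : Measurable G) : sigmaSG S G ≤ m₀ :=
  (hS.prodMk hG).comap_le

theorem measurableSet_sigmaSG_group {Ω : Type*} (S : Ω → ℝ) (G : Ω → Bool) (g : Bool) :
    MeasurableSet[sigmaSG S G] {ω | G ω = g} :=
  ⟨Prod.snd ⁻¹' {g}, measurable_snd (measurableSet_singleton g), rfl⟩

theorem setIntegral_group_eq_of_condExp_sigmaSG_ae_eq {Ω : Type*} [MeasurableSpace Ω]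
    {μ : Measure Ω} [IsFiniteMeasure μ] {Y S : Ω → ℝ} {G : Ω → Bool} (hY : Integrable Y μ)
    (hS : Measurable S) (hG : Measurable G) (hcalib : μ[Y | sigmaSG S G] =ᵐ[μ] S) (g : Bool) :
    ∫ ω in {ω | G ω = g}, S ω ∂μ = ∫ ω in {ω | G ω = g}, Y ω ∂μ :=
  setIntegral_eq_of_condExp_ae_eq (sigmaSG_le hS hG) hY hcalib (measurableSet_sigmaSG_group S G g)

section BinaryOutcome

variable {Ω : Type*} {Y : Ω → ℝ}

theorem sdiff_outcome_one (hY01 : ∀ ω, Y ω = 0 ∨ Y ω = 1) (B : Set Ω) :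
    B \ {ω | Y ω = 1} = {ω | Y ω = 0} ∩ B := by
  ext ω
  rcases hY01 ω with h | h <;> simp [h]

variable [MeasurableSpace Ω] {μ : Measure Ω} {S : Ω → ℝ} {B : Set Ω}

theorem setIntegral_outcome_one_add_zero (hY : Measurable Y) (hY01 : ∀ ω, Y ω = 0 ∨ Y ω = 1)
    {f : Ω → ℝ} (hf : IntegrableOn f B μ) :
    ∫ ω in {ω | Y ω = 1} ∩ B, f ω ∂μ + ∫ ω in {ω | Y ω = 0} ∩ B, f ω ∂μ =
      ∫ ω in B, f ω ∂μ := by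
  rw [← sdiff_outcome_one hY01, Set.inter_comm]
  exact integral_inter_add_sdiff (hY (measurableSet_singleton 1)) hf

theorem measureReal_outcome_one_add_zero (hY : Measurable Y) (hY01 : ∀ ω, Y ω = 0 ∨ Y ω = 1)
    (hB : μ B ≠ ⊤ := by finiteness) :
    μ.real ({ω | Y ω = 1} ∩ B) + μ.real ({ω | Y ω = 0} ∩ B) = μ.real B := by
  rw [← sdiff_outcome_one hY01, Set.inter_comm]
  exact measureReal_inter_add_sdiff (hY (measurableSet_singleton 1)) hB

theorem integrable_outcome [IsFiniteMeasure μ] (hY : Measurable Y)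
    (hY01 : ∀ ω, Y ω = 0 ∨ Y ω = 1) : Integrable Y μ :=
  .of_mem_Icc 0 1 hY.aemeasurable <| .of_forall fun ω => by rcases hY01 ω with h | h <;> simp [h]

theorem setIntegral_outcome (hY : Measurable Y) (hY01 : ∀ ω, Y ω = 0 ∨ Y ω = 1) :
    ∫ ω in B, Y ω ∂μ = μ.real ({ω | Y ω = 1} ∩ B) := by
  have hY1 : MeasurableSet {ω | Y ω = 1} := hY (measurableSet_singleton 1)
  have hY_eq : Y = {ω | Y ω = 1}.indicator 1 := by
    ext ω
    rcases hY01 ω with h | h <;> simp [h]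
  calc ∫ ω in B, Y ω ∂μ = ∫ ω in B, {ω | Y ω = 1}.indicator 1 ω ∂μ := by rw [← hY_eq]
    _ = μ.real ({ω | Y ω = 1} ∩ B) := by
      rw [integral_indicator_one hY1, measureReal_restrict_apply hY1]

theorem baseRate_mul_eq {c d : ℝ} (hY : Measurable Y) (hY01 : ∀ ω, Y ω = 0 ∨ Y ω = 1)
    (hS : IntegrableOn S B μ) (hB_ne_zero : μ B ≠ 0)
    (hcalib : ∫ ω in B, S ω ∂μ = ∫ ω in B, Y ω ∂μ)
    (hpos : ∫ ω in {ω | Y ω = 1} ∩ B, S ω ∂μ = c * μ.real ({ω | Y ω = 1} ∩ B))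
    (hneg : ∫ ω in {ω | Y ω = 0} ∩ B, S ω ∂μ = d * μ.real ({ω | Y ω = 0} ∩ B))
    (hB : μ B ≠ ⊤ := by finiteness) :
    condExpEvent μ B Y * (1 - c + d) = d := by
  have hrate : condExpEvent μ B Y * μ.real B = μ.real ({ω | Y ω = 1} ∩ B) := by
    rw [← setIntegral_eq_mul_of_condExpEvent_eq rfl hB, setIntegral_outcome hY hY01]
  have hscore : c * μ.real ({ω | Y ω = 1} ∩ B) + d * μ.real ({ω | Y ω = 0} ∩ B) =
      μ.real ({ω | Y ω = 1} ∩ B) := by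
    rw [← hpos, ← hneg, setIntegral_outcome_one_add_zero hY hY01 hS, hcalib,
      setIntegral_outcome hY hY01]
  have hmass := measureReal_outcome_one_add_zero hY hY01 hB
  apply mul_right_cancel₀ ((measureReal_ne_zero_iff hB).2 hB_ne_zero)
  linear_combination (1 - c + d) * hrate - hscore + d * hmass

theorem ae_eq_outcome_of_setIntegral_eq (hY : Measurable Y) (hY01 : ∀ ω, Y ω = 0 ∨ Y ω = 1)
    (hB : MeasurableSet B) (hS : IntegrableOn S B μ)
    (hS01 : ∀ᵐ ω ∂μ.restrict B, S ω ∈ Set.Icc 0 1)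
    (hpos : ∫ ω in {ω | Y ω = 1} ∩ B, S ω ∂μ = μ.real ({ω | Y ω = 1} ∩ B))
    (hneg : ∫ ω in {ω | Y ω = 0} ∩ B, S ω ∂μ = 0)
    (hB_ne_top : μ B ≠ ⊤ := by finiteness) :
    S =ᵐ[μ.restrict B] Y := by
  have hcell (y : ℝ) : MeasurableSet ({ω | Y ω = y} ∩ B) :=
    (hY (measurableSet_singleton y)).inter hB
  have hS_cell (y : ℝ) : IntegrableOn S ({ω | Y ω = y} ∩ B) μ := hS.mono_set Set.inter_subset_right
  have hS01_cell (y : ℝ) : ∀ᵐ ω ∂μ.restrict ({ω | Y ω = y} ∩ B), S ω ∈ Set.Icc 0 1 :=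
    ae_restrict_of_ae_restrict_of_subset Set.inter_subset_right hS01
  have hone : S =ᵐ[μ.restrict ({ω | Y ω = 1} ∩ B)] fun _ => 1 := by
    have hfin : μ ({ω | Y ω = 1} ∩ B) ≠ ⊤ :=
      measure_ne_top_of_subset Set.inter_subset_right hB_ne_top
    refine (integral_eq_iff_of_ae_le (hS_cell 1) (integrableOn_const hfin)
      ((hS01_cell 1).mono fun _ h => h.2)).1 ?_
    rw [hpos, setIntegral_const, smul_eq_mul, mul_one]
  have hzero : S =ᵐ[μ.restrict ({ω | Y ω = 0} ∩ B)] 0 :=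
    (integral_eq_zero_iff_of_nonneg_ae ((hS01_cell 0).mono fun _ h => h.1) (hS_cell 0)).1 hneg
  rw [Filter.EventuallyEq, ae_restrict_iff' (hcell _)] at hone hzero
  rw [Filter.EventuallyEq, ae_restrict_iff' hB]
  filter_upwards [hone, hzero] with ω h₁ h₀ hω
  rcases hY01 ω with h | h
  · exact (h₀ ⟨h, hω⟩).trans h.symm
  · exact (h₁ ⟨h, hω⟩).trans h.symm

end BinaryOutcome

theorem ae_eq_of_forall_ae_eq_restrict_fiber {Ω ι β : Type*} [MeasurableSpace Ω] {μ : Measure Ω}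
    [Countable ι] {G : Ω → ι} {f g : Ω → β} (h : ∀ i, f =ᵐ[μ.restrict {ω | G ω = i}] g) :
    f =ᵐ[μ] g := by
  have hcover : ⋃ i, {ω | G ω = i} = Set.univ := Set.iUnion_eq_univ_iff.2 fun ω => ⟨G ω, rfl⟩
  rw [← Measure.restrict_univ (μ := μ), ← hcover]
  exact (ae_restrict_iUnion_iff _ _).2 h

/-- Class balance is expressed by integrals: on a null event `condExpEvent` takes the junk value
`0`, which would constrain the scores through groups lacking one of the classes. -/
theorem classical_kmr_general {Ω ι : Type*} [MeasurableSpace Ω] {μ : Measure Ω}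
    [IsFiniteMeasure μ] [Countable ι] [MeasurableSpace ι] [MeasurableSingletonClass ι]
    {Y S : Ω → ℝ} {G : Ω → ι} {c d : ℝ}
    (hY : Measurable Y) (hY01 : ∀ ω, Y ω = 0 ∨ Y ω = 1) (hG : Measurable G)
    (hS : AEMeasurable S μ) (hS01 : ∀ᵐ ω ∂μ, S ω ∈ Set.Icc 0 1)
    (hcalib : ∀ g, ∫ ω in {ω | G ω = g}, S ω ∂μ = ∫ ω in {ω | G ω = g}, Y ω ∂μ)
    (hpos : ∀ g, ∫ ω in {ω | Y ω = 1} ∩ {ω | G ω = g}, S ω ∂μ =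
      c * μ.real ({ω | Y ω = 1} ∩ {ω | G ω = g}))
    (hneg : ∀ g, ∫ ω in {ω | Y ω = 0} ∩ {ω | G ω = g}, S ω ∂μ =
      d * μ.real ({ω | Y ω = 0} ∩ {ω | G ω = g}))
    {a b : ι} (ha : μ {ω | G ω = a} ≠ 0) (hb : μ {ω | G ω = b} ≠ 0) :
    condExpEvent μ {ω | G ω = a} Y = condExpEvent μ {ω | G ω = b} Y ∨ S =ᵐ[μ] Y := by
  refine or_iff_not_imp_left.2 fun hne => ?_
  have hS_int : Integrable S μ := .of_mem_Icc 0 1 hS hS01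
  have hrate {g : ι} (hg : μ {ω | G ω = g} ≠ 0) :
      condExpEvent μ {ω | G ω = g} Y * (1 - c + d) = d :=
    baseRate_mul_eq hY hY01 hS_int.integrableOn hg (hcalib g) (hpos g) (hneg g)
  have hslope : 1 - c + d = 0 := by
    by_contra h
    exact hne (mul_right_cancel₀ h ((hrate ha).trans (hrate hb).symm))
  have hd : d = 0 := by rw [← hrate ha, hslope, mul_zero]
  have hc : c = 1 := by linarith
  refine ae_eq_of_forall_ae_eq_restrict_fiber (G := G) fun g => ?_
  exact ae_eq_outcome_of_setIntegral_eq hY hY01 (hG (measurableSet_singleton g))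
    hS_int.integrableOn (ae_restrict_of_ae hS01) (by rw [hpos, hc, one_mul])
    (by rw [hneg, hd, zero_mul])

/-- **Classical KMR.** If `S ∈ [0,1]` is calibrated (a version of `E[Y | σ(S,G)]`) and
satisfies positive- and negative-class balance, then either the base rates coincide
or `S = Y` almost everywhere. -/
theorem classical_kmr {Ω : Type*} [𝓕 : MeasurableSpace Ω] (μ : Measure Ω)
    [IsProbabilityMeasure μ]
    (Y : Ω → ℝ) (hYmeas : Measurable Y) (hY01 : ∀ ω, Y ω = 0 ∨ Y ω = 1)
    (G : Ω → Bool) (hGmeas : Measurable G)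
    (hGa : 0 < μ {ω | G ω = true}) (hGb : 0 < μ {ω | G ω = false})
    (S : Ω → ℝ) (hSmeas : Measurable S)
    (hS01 : ∀ᵐ ω ∂μ, 0 ≤ S ω ∧ S ω ≤ 1)
    (p : Bool → ℝ) (hp : ∀ g, p g = condExpEvent μ {ω | G ω = g} Y)
    (hp01 : ∀ g, 0 < p g ∧ p g < 1)
    -- (i) within-group calibration: S is a version of E[Y | σ(S,G)]
    (hcalib : μ[Y | sigmaSG S G] =ᵐ[μ] S)
    -- (ii) positive-class balance, conditioning events have positive measure
    (hpos_a : 0 < μ ({ω | Y ω = 1} ∩ {ω | G ω = true}))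
    (hpos_b : 0 < μ ({ω | Y ω = 1} ∩ {ω | G ω = false}))
    (hbal_pos : condExpEvent μ ({ω | Y ω = 1} ∩ {ω | G ω = true}) S
      = condExpEvent μ ({ω | Y ω = 1} ∩ {ω | G ω = false}) S)
    -- (iii) negative-class balance, conditioning events have positive measure
    (hneg_a : 0 < μ ({ω | Y ω = 0} ∩ {ω | G ω = true}))
    (hneg_b : 0 < μ ({ω | Y ω = 0} ∩ {ω | G ω = false}))
    (hbal_neg : condExpEvent μ ({ω | Y ω = 0} ∩ {ω | G ω = true}) S
      = condExpEvent μ ({ω | Y ω = 0} ∩ {ω | G ω = false}) S) :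
    p true = p false ∨ S =ᵐ[μ] Y := by
  have hcalib_group := setIntegral_group_eq_of_condExp_sigmaSG_ae_eq
    (integrable_outcome hYmeas hY01) hSmeas hGmeas hcalib
  rw [hp, hp]
  exact classical_kmr_general hYmeas hY01 hGmeas hSmeas.aemeasurable hS01 hcalib_group
    (Bool.forall_bool.2 ⟨setIntegral_eq_mul_of_condExpEvent_eq rfl,
      setIntegral_eq_mul_of_condExpEvent_eq hbal_pos⟩)
    (Bool.forall_bool.2 ⟨setIntegral_eq_mul_of_condExpEvent_eq rfl,
      setIntegral_eq_mul_of_condExpEvent_eq hbal_neg⟩) hGa.ne' hGb.ne'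
end

section
/- (Mean-embedding collapse.) If μ_a = μ_b (distributional parity), δ_0 = 0 and δ_1 = 0 (class-conditional separation), and p_a ≠ p_b, then μ_{1,a} = μ_{0,a} and μ_{1,b} = μ_{0,b}; that is, the class-conditional embeddings coincide. -/
theorem smul_add_one_sub_smul_eq_iff {R M : Type*} [Ring R] [IsDomain R] [AddCommGroup M]
    [Module R M] [Module.IsTorsionFree R M] {x y : M} {c d : R} :
    c • x + (1 - c) • y = d • x + (1 - d) • y ↔ x = y ∨ c = d := by
  simp only [add_comm (_ • x), ← AffineMap.lineMap_apply_module, AffineMap.lineMap_eq_lineMap_iff,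
    eq_comm (a := y)]

theorem mean_embedding_collapse_general {R M : Type*} [Ring R] [IsDomain R] [AddCommGroup M]
    [Module R M] [Module.IsTorsionFree R M] (μ1a μ0a μ1b μ0b : M) (pa pb : R)
    (hparity : pa • μ1a + (1 - pa) • μ0a = pb • μ1b + (1 - pb) • μ0b)
    (hsep1 : μ1a - μ1b = 0) (hsep0 : μ0a - μ0b = 0)
    (hbase : pa ≠ pb) :
    μ1a = μ0a ∧ μ1b = μ0b := by
  obtain rfl : μ1a = μ1b := sub_eq_zero.mp hsep1
  obtain rfl : μ0a = μ0b := sub_eq_zero.mp hsep0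
  have hcollapse : μ1a = μ0a := (smul_add_one_sub_smul_eq_iff.mp hparity).resolve_right hbase
  exact ⟨hcollapse, hcollapse⟩

/-- **Mean-embedding collapse.** With group embeddings
`μ_g = p_g • μ_{1,g} + (1 - p_g) • μ_{0,g}` and class-conditional group differences
`δ_y = μ_{y,a} - μ_{y,b}`, if distributional parity `μ_a = μ_b` and class-conditional
separation `δ_0 = 0`, `δ_1 = 0` hold with `p_a ≠ p_b`, then the class-conditional
embeddings coincide in each group. -/
theorem mean_embedding_collapse {M : Type*} [AddCommGroup M] [Module ℝ M]
    (μ1a μ0a μ1b μ0b : M) (pa pb : ℝ)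
    (hparity : pa • μ1a + (1 - pa) • μ0a = pb • μ1b + (1 - pb) • μ0b)
    (hsep1 : μ1a - μ1b = 0) (hsep0 : μ0a - μ0b = 0)
    (hbase : pa ≠ pb) :
    μ1a = μ0a ∧ μ1b = μ0b :=
  mean_embedding_collapse_general μ1a μ0a μ1b μ0b pa pb hparity hsep1 hsep0 hbase
end

section
/- (Impossibility of fair feature learning, distributional form.) Suppose: (a) the conditional law of Z given {G = a} equals the conditional law of Z given {G = b} (distributional parity); and (b) for each y ∈ {0,1}, the conditional law of Z given {Y = y} ∩ {G = a} equals the conditional law of Z given {Y = y} ∩ {G = b} (class-conditional separation), all conditioning events having positive measure. If p_a ≠ p_b, then the conditional law of Z given {Y = 1} equals the conditional law of Z given {Y = 0}; consequently, for every bounded measurable f : 𝒵 → ℝ, E[f ∘ Z | {Y = 1}] = E[f ∘ Z | {Y = 0}]. -/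
open MeasureTheory

/-- The conditional law of `Z` given the event `A`: the pushforward under `Z` of the
normalized restriction of `μ` to `A`. -/
noncomputable def condLaw {Ω 𝒵 : Type*} [MeasurableSpace Ω] [MeasurableSpace 𝒵]
    (μ : Measure Ω) (Z : Ω → 𝒵) (A : Set Ω) : Measure 𝒵 :=
  Measure.map Z ((μ A)⁻¹ • μ.restrict A)

section Conditioning

open ProbabilityTheory

variable {Ω 𝒵 γ : Type*} [MeasurableSpace Ω] [MeasurableSpace 𝒵] {μ : Measure Ω}
  {Z : Ω → 𝒵} {A B E : Set Ω}

lemma measure_smul_cond [IsFiniteMeasure μ] (A : Set Ω) : μ A • μ[|A] = μ.restrict A := by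
  rcases eq_or_ne (μ A) 0 with hA | hA
  · rw [hA, zero_smul, Measure.restrict_eq_zero.2 hA]
  · rw [ProbabilityTheory.cond, smul_smul, ENNReal.mul_inv_cancel hA (measure_ne_top μ A), one_smul]

lemma restrict_cond [IsFiniteMeasure μ] (hE : MeasurableSet E) (A : Set Ω) :
    μ[|A].restrict E = μ[E | A] • μ[|E ∩ A] := by
  rw [cond_apply' hE, Set.inter_comm A E, mul_smul, measure_smul_cond,
    ProbabilityTheory.cond, Measure.restrict_smul, Measure.restrict_restrict hE]

lemma condLaw_eq_map_cond (μ : Measure Ω) (Z : Ω → 𝒵) (A : Set Ω) :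
    condLaw μ Z A = μ[|A].map Z :=
  rfl

instance isFiniteMeasure_condLaw : IsFiniteMeasure (condLaw μ Z A) :=
  inferInstanceAs (IsFiniteMeasure (μ[|A].map Z))

lemma condExpEvent_eq_integral_cond (μ : Measure Ω) (A : Set Ω) (f : Ω → ℝ) :
    condExpEvent μ A f = ∫ ω, f ω ∂μ[|A] := by
  rw [ProbabilityTheory.cond, integral_smul_measure, ENNReal.toReal_inv, smul_eq_mul,
    condExpEvent]

lemma condExpEvent_comp (hZ : Measurable Z) {f : 𝒵 → ℝ} (hf : Measurable f) :
    condExpEvent μ A (fun ω => f (Z ω)) = ∫ z, f z ∂condLaw μ Z A := by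
  rw [condExpEvent_eq_integral_cond, condLaw_eq_map_cond,
    integral_map hZ.aemeasurable hf.aestronglyMeasurable]

lemma condExpEvent_eq_cond_real_of_zero_or_one {Y : Ω → ℝ} (hY : Measurable Y)
    (hY01 : ∀ ω, Y ω = 0 ∨ Y ω = 1) : condExpEvent μ A Y = μ[|A].real {ω | Y ω = 1} := by
  have hYind : Y = Set.indicator {ω | Y ω = 1} 1 := by
    ext ω
    rcases hY01 ω with h | h <;> simp [h]
  calc condExpEvent μ A Y
      = ∫ ω, Set.indicator {ω | Y ω = 1} 1 ω ∂μ[|A] := by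
        rw [condExpEvent_eq_integral_cond, ← hYind]
    _ = μ[|A].real {ω | Y ω = 1} := integral_indicator_one (hY (measurableSet_singleton 1))

lemma condLaw_eq_add_inter_compl [IsFiniteMeasure μ] (hZ : Measurable Z) (hE : MeasurableSet E)
    (A : Set Ω) :
    condLaw μ Z A = μ[E | A] • condLaw μ Z (E ∩ A) + μ[Eᶜ | A] • condLaw μ Z (Eᶜ ∩ A) := by
  simp only [condLaw_eq_map_cond, ← Measure.map_smul, ← restrict_cond hE,
    ← restrict_cond hE.compl, ← Measure.map_add _ _ hZ, Measure.restrict_add_restrict_compl hE]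

lemma condLaw_real_eq_lineMap [IsFiniteMeasure μ] (hZ : Measurable Z) (hE : MeasurableSet E)
    (hA : μ A ≠ 0) (S : Set 𝒵) :
    (condLaw μ Z A).real S = AffineMap.lineMap ((condLaw μ Z (Eᶜ ∩ A)).real S)
      ((condLaw μ Z (E ∩ A)).real S) (μ[|A].real E) := by
  have := cond_isProbabilityMeasure hA
  have hfinite (F : Set Ω) : (μ[F | A] • condLaw μ Z (F ∩ A)) S ≠ ⊤ :=
    ENNReal.mul_ne_top (measure_ne_top _ _) (measure_ne_top _ _)
  rw [condLaw_eq_add_inter_compl hZ hE A, measureReal_add_apply (hfinite E) (hfinite Eᶜ),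
    measureReal_ennreal_smul_apply, measureReal_ennreal_smul_apply,
    AffineMap.lineMap_apply_ring, ← probReal_compl_eq_one_sub hE]
  exact add_comm _ _

-- The laws of `Z` given `A` and given `B` are the points at parameters `μ[E | A]` and `μ[E | B]` of
-- the same segment; parity makes these points equal at distinct parameters, so the segment is
-- degenerate.
lemma condLaw_inter_eq_condLaw_compl_inter [IsFiniteMeasure μ] (hZ : Measurable Z)
    (hE : MeasurableSet E) (hA : μ A ≠ 0) (hB : μ B ≠ 0)
    (hparity : condLaw μ Z A = condLaw μ Z B)
    (hsep : condLaw μ Z (E ∩ A) = condLaw μ Z (E ∩ B))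
    (hsep_compl : condLaw μ Z (Eᶜ ∩ A) = condLaw μ Z (Eᶜ ∩ B))
    (hrate : μ[|A].real E ≠ μ[|B].real E) :
    condLaw μ Z (E ∩ B) = condLaw μ Z (Eᶜ ∩ B) := by
  refine Measure.ext fun S _ => (measureReal_eq_measureReal_iff).1 ?_
  have hline := condLaw_real_eq_lineMap hZ hE hA S
  rw [hparity, hsep, hsep_compl, condLaw_real_eq_lineMap hZ hE hB S,
    AffineMap.lineMap_eq_lineMap_iff] at hline
  exact (hline.resolve_right hrate.symm).symm

lemma measure_mul_condLaw_apply [IsFiniteMeasure μ] (hZ : Measurable Z) (A : Set Ω) {S : Set 𝒵}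
    (hS : MeasurableSet S) : μ A * condLaw μ Z A S = μ (Z ⁻¹' S ∩ A) := by
  rw [condLaw_eq_map_cond, Measure.map_apply hZ hS, ← smul_eq_mul, ← Measure.smul_apply,
    measure_smul_cond, Measure.restrict_apply (hZ hS)]

variable [MeasurableSpace γ] [Countable γ] [MeasurableSingletonClass γ] {G : Ω → γ}

lemma tsum_measure_inter_fiber (hG : Measurable G) (μ : Measure Ω) (B : Set Ω) :
    ∑' g, μ (B ∩ {ω | G ω = g}) = μ B := by
  have hfiber (g : γ) : MeasurableSet {ω | G ω = g} := hG (measurableSet_singleton g)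
  have hdisjoint : Pairwise (Function.onFun Disjoint fun g => {ω | G ω = g}) :=
    pairwise_disjoint_fiber G
  have hcover : ⋃ g, {ω | G ω = g} = Set.univ := Set.iUnion_eq_univ_iff.2 fun ω => ⟨G ω, rfl⟩
  simp only [Set.inter_comm B, ← Measure.restrict_apply (hfiber _)]
  rw [← measure_iUnion hdisjoint hfiber, hcover, Measure.restrict_apply_univ]

lemma condLaw_eq_of_forall_fiber [IsFiniteMeasure μ] (hZ : Measurable Z) (hG : Measurable G)
    (hB : μ B ≠ 0) {ν : Measure 𝒵}
    (hν : ∀ g, 0 < μ (B ∩ {ω | G ω = g}) → condLaw μ Z (B ∩ {ω | G ω = g}) = ν) :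
    condLaw μ Z B = ν := by
  ext S hS
  have hfiber (g : γ) :
      μ (Z ⁻¹' S ∩ B ∩ {ω | G ω = g}) = μ (B ∩ {ω | G ω = g}) * ν S := by
    rw [Set.inter_assoc, ← measure_mul_condLaw_apply hZ _ hS]
    rcases eq_zero_or_pos (μ (B ∩ {ω | G ω = g})) with hg | hg
    · rw [hg, zero_mul, zero_mul]
    · rw [hν g hg]
  refine (ENNReal.mul_right_inj hB (measure_ne_top μ B)).1 ?_
  calc μ B * condLaw μ Z B S
      = μ (Z ⁻¹' S ∩ B) := measure_mul_condLaw_apply hZ B hS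
    _ = ∑' g, μ (B ∩ {ω | G ω = g}) * ν S := by
        simp only [← hfiber, tsum_measure_inter_fiber hG]
    _ = μ B * ν S := by rw [ENNReal.tsum_mul_right, tsum_measure_inter_fiber hG]

theorem fair_feature_impossibility_general [IsFiniteMeasure μ] (hZ : Measurable Z)
    {Y : Ω → ℝ} (hY : Measurable Y) (hY01 : ∀ ω, Y ω = 0 ∨ Y ω = 1) (hG : Measurable G) {a b : γ}
    (hrate : condExpEvent μ {ω | G ω = a} Y ≠ condExpEvent μ {ω | G ω = b} Y)
    (hparity : condLaw μ Z {ω | G ω = a} = condLaw μ Z {ω | G ω = b})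
    (hpos : ∀ y : ℝ, y = 0 ∨ y = 1 →
      0 < μ ({ω | Y ω = y} ∩ {ω | G ω = a}) ∧ 0 < μ ({ω | Y ω = y} ∩ {ω | G ω = b}))
    (hsep : ∀ y : ℝ, y = 0 ∨ y = 1 → ∀ g, 0 < μ ({ω | Y ω = y} ∩ {ω | G ω = g}) →
      condLaw μ Z ({ω | Y ω = y} ∩ {ω | G ω = g})
        = condLaw μ Z ({ω | Y ω = y} ∩ {ω | G ω = b})) :
    condLaw μ Z {ω | Y ω = 1} = condLaw μ Z {ω | Y ω = 0} ∧
    ∀ f : 𝒵 → ℝ, Measurable f → Integrable f (condLaw μ Z {ω | Y ω = 1}) →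
      condExpEvent μ {ω | Y ω = 1} (fun ω => f (Z ω))
        = condExpEvent μ {ω | Y ω = 0} (fun ω => f (Z ω)) := by
  suffices hlaw : condLaw μ Z {ω | Y ω = 1} = condLaw μ Z {ω | Y ω = 0} from
    ⟨hlaw, fun f hf _ => by rw [condExpEvent_comp hZ hf, condExpEvent_comp hZ hf, hlaw]⟩
  have hclass (y : ℝ) (hy : y = 0 ∨ y = 1) :
      condLaw μ Z {ω | Y ω = y} = condLaw μ Z ({ω | Y ω = y} ∩ {ω | G ω = b}) :=
    condLaw_eq_of_forall_fiber hZ hG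
      (measure_pos_of_superset Set.inter_subset_left (hpos y hy).2.ne').ne' (hsep y hy)
  have hcompl : {ω | Y ω = 1}ᶜ = {ω | Y ω = 0} := by
    ext ω
    rcases hY01 ω with h | h <;> simp [h]
  obtain ⟨hpos_a, hpos_b⟩ := hpos 1 (.inr rfl)
  rw [hclass 1 (.inr rfl), hclass 0 (.inl rfl), ← hcompl]
  refine condLaw_inter_eq_condLaw_compl_inter hZ (hY (measurableSet_singleton 1))
    (measure_pos_of_superset Set.inter_subset_right hpos_a.ne').ne'
    (measure_pos_of_superset Set.inter_subset_right hpos_b.ne').ne'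
    hparity (hsep 1 (.inr rfl) a hpos_a) ?_ ?_
  · rw [hcompl]
    exact hsep 0 (.inl rfl) a (hpos 0 (.inl rfl)).1
  · simpa only [condExpEvent_eq_cond_real_of_zero_or_one hY hY01] using hrate

end Conditioning

/-- **Impossibility of fair feature learning, distributional form.** If the
representation `Z` satisfies distributional parity across groups and class-conditional
separation, and the base rates differ, then `Z` carries no class signal: its
conditional laws given `Y = 1` and `Y = 0` coincide, hence every bounded measurable
downstream predictor has equal class-conditional means. -/
theorem fair_feature_impossibility {Ω 𝒵 : Type*} [MeasurableSpace Ω] [MeasurableSpace 𝒵]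
    (μ : Measure Ω) [IsProbabilityMeasure μ]
    (Z : Ω → 𝒵) (hZmeas : Measurable Z)
    (Y : Ω → ℝ) (hYmeas : Measurable Y) (hY01 : ∀ ω, Y ω = 0 ∨ Y ω = 1)
    (G : Ω → Bool) (hGmeas : Measurable G)
    (hGa : 0 < μ {ω | G ω = true}) (hGb : 0 < μ {ω | G ω = false})
    (p : Bool → ℝ) (hp : ∀ g, p g = condExpEvent μ {ω | G ω = g} Y)
    (hp01 : ∀ g, 0 < p g ∧ p g < 1)
    (hbase : p true ≠ p false)
    -- (a) distributional parity
    (hparity : condLaw μ Z {ω | G ω = true} = condLaw μ Z {ω | G ω = false})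
    -- (b) class-conditional separation, conditioning events of positive measure
    (hpos : ∀ y : ℝ, y = 0 ∨ y = 1 → ∀ g : Bool, 0 < μ ({ω | Y ω = y} ∩ {ω | G ω = g}))
    (hsep : ∀ y : ℝ, y = 0 ∨ y = 1 →
      condLaw μ Z ({ω | Y ω = y} ∩ {ω | G ω = true})
        = condLaw μ Z ({ω | Y ω = y} ∩ {ω | G ω = false})) :
    condLaw μ Z {ω | Y ω = 1} = condLaw μ Z {ω | Y ω = 0} ∧
    ∀ f : 𝒵 → ℝ, Measurable f → (∃ C : ℝ, ∀ z, |f z| ≤ C) →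
      condExpEvent μ {ω | Y ω = 1} (fun ω => f (Z ω))
        = condExpEvent μ {ω | Y ω = 0} (fun ω => f (Z ω)) := by
  obtain ⟨hlaw, hmean⟩ := fair_feature_impossibility_general hZmeas hYmeas hY01 hGmeas
    (hp true ▸ hp false ▸ hbase) hparity (fun y hy => ⟨hpos y hy true, hpos y hy false⟩)
    fun y hy => Bool.forall_bool.2 ⟨fun _ => rfl, fun _ => hsep y hy⟩
  exact ⟨hlaw, fun f hf ⟨C, hC⟩ =>
    hmean f hf (.of_bound hf.aestronglyMeasurable C (ae_of_all _ hC))⟩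
end

section
/- (Approximate fair feature learning.) Assume 0 ≤ p_a ≤ 1, 0 ≤ p_b ≤ 1 and p_a ≠ p_b. If ‖μ_a − μ_b‖ ≤ ε (ε-approximate parity) and ‖δ_y‖ ≤ ρ for each y ∈ {0,1} (ρ-approximate class-conditional separation), then for both g ∈ {a,b}: ‖μ_{1,g} − μ_{0,g}‖ ≤ (ε + ρ) / |p_a − p_b|. -/
/-!
The two group embeddings differ for two reasons: the base rates differ, and the
class-conditional embeddings differ. Evaluating the first effect in group `a` and the second at the
base rate of group `b` gives the exact identity
`(p_a - p_b) • (μ_{1,a} - μ_{0,a}) = (μ_a - μ_b) - (p_b • δ_1 + (1 - p_b) • δ_0)`.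
Its last term is a convex combination of two vectors in the ball of radius `ρ`, hence stays there.
Exchanging the two groups bounds the signal in group `b`.
-/

theorem sub_smul_sub_eq_mixture_sub_sub {R M : Type*} [Ring R] [AddCommGroup M] [Module R M]
    (p q : R) (x₁ x₀ y₁ y₀ : M) :
    (p - q) • (x₁ - x₀) =
      ((p • x₁ + (1 - p) • x₀) - (q • y₁ + (1 - q) • y₀)) -
        (q • (x₁ - y₁) + (1 - q) • (x₀ - y₀)) := by
  simp only [sub_smul, smul_sub, one_smul]
  abel

section SeminormedSpace

variable {E : Type*} [SeminormedAddCommGroup E] [NormedSpace ℝ E]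

theorem norm_smul_add_one_sub_smul_le {p r : ℝ} {x y : E} (hp : 0 ≤ p ∧ p ≤ 1)
    (hx : ‖x‖ ≤ r) (hy : ‖y‖ ≤ r) : ‖p • x + (1 - p) • y‖ ≤ r := by
  rw [← mem_closedBall_zero_iff] at hx hy ⊢
  exact convex_closedBall 0 r hx hy hp.1 (sub_nonneg.mpr hp.2) (add_sub_cancel p 1)

theorem approx_fair_feature_learning_general {μ1a μ0a μ1b μ0b : E} {pa pb ε ρ : ℝ}
    (hpb : 0 ≤ pb ∧ pb ≤ 1) (hbase : pa ≠ pb)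
    (hparity : ‖(pa • μ1a + (1 - pa) • μ0a) - (pb • μ1b + (1 - pb) • μ0b)‖ ≤ ε)
    (hsep1 : ‖μ1a - μ1b‖ ≤ ρ) (hsep0 : ‖μ0a - μ0b‖ ≤ ρ) :
    ‖μ1a - μ0a‖ ≤ (ε + ρ) / |pa - pb| := by
  rw [le_div_iff₀' (abs_sub_pos.mpr hbase)]
  calc |pa - pb| * ‖μ1a - μ0a‖
      = ‖(pa - pb) • (μ1a - μ0a)‖ := by rw [norm_smul, Real.norm_eq_abs]
    _ = ‖((pa • μ1a + (1 - pa) • μ0a) - (pb • μ1b + (1 - pb) • μ0b)) -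
          (pb • (μ1a - μ1b) + (1 - pb) • (μ0a - μ0b))‖ := by
        rw [sub_smul_sub_eq_mixture_sub_sub]
    _ ≤ ε + ρ := norm_sub_le_of_le hparity (norm_smul_add_one_sub_smul_le hpb hsep1 hsep0)

end SeminormedSpace

/-- **Approximate fair feature learning.** With group embeddings
`μ_g = p_g • μ_{1,g} + (1 - p_g) • μ_{0,g}` and class-conditional group differences
`δ_y = μ_{y,a} - μ_{y,b}`, if parity holds up to `ε` and class-conditional separation
up to `ρ`, and the base rates differ, then the within-group class-conditional signal
is bounded by `(ε + ρ)/|p_a - p_b|` in each group. -/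
theorem approx_fair_feature_learning {H : Type*} [NormedAddCommGroup H]
    [InnerProductSpace ℝ H]
    (μ1a μ0a μ1b μ0b : H) (pa pb : ℝ)
    (hpa : 0 ≤ pa ∧ pa ≤ 1) (hpb : 0 ≤ pb ∧ pb ≤ 1) (hbase : pa ≠ pb)
    (ε ρ : ℝ) (hε : 0 ≤ ε) (hρ : 0 ≤ ρ)
    (hparity : ‖(pa • μ1a + (1 - pa) • μ0a) - (pb • μ1b + (1 - pb) • μ0b)‖ ≤ ε)
    (hsep1 : ‖μ1a - μ1b‖ ≤ ρ) (hsep0 : ‖μ0a - μ0b‖ ≤ ρ) :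
    ‖μ1a - μ0a‖ ≤ (ε + ρ) / |pa - pb| ∧
    ‖μ1b - μ0b‖ ≤ (ε + ρ) / |pa - pb| := by
  refine ⟨approx_fair_feature_learning_general hpb hbase hparity hsep1 hsep0, ?_⟩
  rw [norm_sub_rev] at hparity hsep1 hsep0
  rw [abs_sub_comm]
  exact approx_fair_feature_learning_general hpa hbase.symm hparity hsep1 hsep0
end
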